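/- arXiv:2411.03177 — 2 statements merged into one kernel-verified Lean document; each statement's English description precedes it below -/
import Mathlib

section
/- Let $\bar{\alpha}, \bar{\alpha}' \in (0,1]$ and let $s, s' > 0$. Then $\frac{1}{s}\sqrt{\frac{1-\bar{\alpha}}{\bar{\alpha}}} = \frac{1}{s'}\sqrt{\frac{1-\bar{\alpha}'}{\bar{\alpha}'}}$ if and only if $\bar{\alpha}' = \frac{s^2 \bar{\alpha}}{s'^2 + \bar{\alpha}(s^2 - s'^2)}$. -/
/-!
Both sides are nonnegative, so the uncertainties agree iff their squares do. With denominators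
cleared, the squared equation is linear in `ᾱ'`, and the coefficient `s'² + ᾱ(s² - s'²)` is a convex
combination of `s'²` and `s²`, hence nonzero: solving for `ᾱ'` is the update rule.
-/

theorem mul_sqrt_eq_mul_sqrt_iff {c d x y : ℝ} (hc : 0 ≤ c) (hd : 0 ≤ d) (hx : 0 ≤ x)
    (hy : 0 ≤ y) : c * √x = d * √y ↔ c ^ 2 * x = d ^ 2 * y := by
  rw [← sq_eq_sq₀ (by positivity) (by positivity), mul_pow, mul_pow, Real.sq_sqrt hx,
    Real.sq_sqrt hy]

theorem one_div_mul_one_sub_div_eq_iff {K : Type*} [Field K] {a b u v : K} (ha : a ≠ 0)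
    (hb : b ≠ 0) (hu : u ≠ 0) (hv : v ≠ 0) (hD : v + a * (u - v) ≠ 0) :
    1 / u * ((1 - a) / a) = 1 / v * ((1 - b) / b) ↔ b = u * a / (v + a * (u - v)) :=
  calc
    1 / u * ((1 - a) / a) = 1 / v * ((1 - b) / b)
        ↔ (1 - a) * (v * b) = (1 - b) * (u * a) := by
      rw [div_mul_div_comm, div_mul_div_comm, one_mul, one_mul,
        div_eq_div_iff (mul_ne_zero hu ha) (mul_ne_zero hv hb)]
    _ ↔ b * (v + a * (u - v)) = u * a := by
      constructor <;> intro h <;> linear_combination h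
    _ ↔ b = u * a / (v + a * (u - v)) := (eq_div_iff hD).symm

/-- Proposition 1 (noise schedule rescaling), as an equivalence:
for `ᾱ, ᾱ' ∈ (0,1]` and `s, s' > 0`, the per-patch uncertainty
`σ/s = (1/s)·√((1-ᾱ)/ᾱ)` is preserved iff
`ᾱ' = s²ᾱ / (s'² + ᾱ(s² - s'²))`. -/
theorem noise_schedule_rescale_iff
    (abar abar' : ℝ) (habar : abar ∈ Set.Ioc (0 : ℝ) 1) (habar' : abar' ∈ Set.Ioc (0 : ℝ) 1)
    (s s' : ℝ) (hs : 0 < s) (hs' : 0 < s') :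
    (1 / s) * Real.sqrt ((1 - abar) / abar) = (1 / s') * Real.sqrt ((1 - abar') / abar') ↔
      abar' = s ^ 2 * abar / (s' ^ 2 + abar * (s ^ 2 - s' ^ 2)) := by
  have variance_nonneg {a : ℝ} (ha : a ∈ Set.Ioc (0 : ℝ) 1) : 0 ≤ (1 - a) / a :=
    div_nonneg (sub_nonneg.mpr ha.2) ha.1.le
  have denom_pos : 0 < s' ^ 2 + abar * (s ^ 2 - s' ^ 2) :=
    (convex_Ioi (0 : ℝ)).add_smul_sub_mem (pow_pos hs' 2) (pow_pos hs 2)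
      (Set.Ioc_subset_Icc_self habar)
  rw [mul_sqrt_eq_mul_sqrt_iff (one_div_pos.mpr hs).le (one_div_pos.mpr hs').le
      (variance_nonneg habar) (variance_nonneg habar'), one_div_pow, one_div_pow]
  exact one_div_mul_one_sub_div_eq_iff habar.1.ne' habar'.1.ne' (pow_pos hs 2).ne'
    (pow_pos hs' 2).ne' denom_pos.ne'
end

section
/- Let $\bar{\alpha} \in (0,1]$ and $s, s' > 0$, and define $\bar{\alpha}' = \frac{s^2 \bar{\alpha}}{s'^2 + \bar{\alpha}(s^2 - s'^2)}$. Then $\bar{\alpha}' \in (0,1]$, and the associated noise levels satisfy $\sigma' = \frac{s'}{s}\sigma$, where $\sigma = \sqrt{(1-\bar{\alpha})/\bar{\alpha}}$ and $\sigma' = \sqrt{(1-\bar{\alpha}')/\bar{\alpha}'}$. -/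
/-!
Since `s'² + ᾱ(s² - s'²) = s²ᾱ + s'²(1 - ᾱ)`, the rescaled coefficient is the fraction `x / (x + y)`
of a signal weight `x = s²ᾱ` against a noise weight `y = s'²(1 - ᾱ)`. Its noise-to-signal ratio is
therefore `y / x`, which is `(s'/s)²` times the original ratio.
-/

theorem div_add_mem_Ioc_zero_one {K : Type*} [Semifield K] [LinearOrder K] [IsStrictOrderedRing K]
    {x y : K} (hx : 0 < x) (hy : 0 ≤ y) : x / (x + y) ∈ Set.Ioc (0 : K) 1 :=
  have hxy : 0 < x + y := add_pos_of_pos_of_nonneg hx hy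
  ⟨div_pos hx hxy, (div_le_one hxy).2 (le_add_of_nonneg_right hy)⟩

theorem one_sub_div_add_div_div_add {K : Type*} [DivisionRing K] {x y : K} (hxy : x + y ≠ 0) :
    (1 - x / (x + y)) / (x / (x + y)) = y / x := by
  rw [one_sub_div hxy, add_sub_cancel_left, div_div_div_cancel_right₀ hxy]

/-- The rescaling rule `ᾱ' = s²ᾱ / (s'² + ᾱ(s² - s'²))` is well defined
(maps `(0,1]` into `(0,1]`) and multiplies the noise level
`σ = √((1-ᾱ)/ᾱ)` exactly by `s'/s`. -/
theorem noise_schedule_rescale_wellDefined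
    (abar : ℝ) (habar : abar ∈ Set.Ioc (0 : ℝ) 1)
    (s s' : ℝ) (hs : 0 < s) (hs' : 0 < s')
    (abar' : ℝ) (habar' : abar' = s ^ 2 * abar / (s' ^ 2 + abar * (s ^ 2 - s' ^ 2))) :
    abar' ∈ Set.Ioc (0 : ℝ) 1 ∧
      Real.sqrt ((1 - abar') / abar') = (s' / s) * Real.sqrt ((1 - abar) / abar) := by
  obtain ⟨abar_pos, abar_le_one⟩ := habar
  have signal_pos : 0 < s ^ 2 * abar := mul_pos (pow_pos hs 2) abar_pos
  have noise_nonneg : 0 ≤ s' ^ 2 * (1 - abar) :=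
    mul_nonneg (sq_nonneg s') (sub_nonneg.2 abar_le_one)
  have denom_ne_zero : s ^ 2 * abar + s' ^ 2 * (1 - abar) ≠ 0 :=
    (add_pos_of_pos_of_nonneg signal_pos noise_nonneg).ne'
  have denom_eq :
      s' ^ 2 + abar * (s ^ 2 - s' ^ 2) = s ^ 2 * abar + s' ^ 2 * (1 - abar) := by ring
  rw [denom_eq] at habar'
  have ratio_eq : (1 - abar') / abar' = (s' / s) ^ 2 * ((1 - abar) / abar) := by
    rw [habar', one_sub_div_add_div_div_add denom_ne_zero, mul_div_mul_comm, div_pow]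
  refine ⟨habar' ▸ div_add_mem_Ioc_zero_one signal_pos noise_nonneg, ?_⟩
  rw [ratio_eq, Real.sqrt_mul (sq_nonneg _), Real.sqrt_sq (div_pos hs' hs).le]
end
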